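/- arXiv:math/0702664 — 4 statements merged into one kernel-verified Lean document; each statement's English description precedes it below -/
import Mathlib

section
/- For every λ ∈ ℝ, the maps C_{λ,λ}(X)(f) = X′f, C_{λ,λ+2}(X)(f) = X‴f + 2X″f′ and C_{λ,λ+3}(X)(f) = X‴f′ + X″f″ are 1-cocycles on Vect(1) with values in D_{λ,λ}, D_{λ,λ+2} and D_{λ,λ+3} respectively; and the maps C_{0,1}(X)(f) = X″f and C̃_{0,1}(X)(f) = (X′f)′ are 1-cocycles with values in D_{0,1}. -/
/-!
A weight-`α` density `a` and a weight-`λ` density `f` multiply to a density of weight `λ + α`, and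
differentiation of densities of weight `λ` commutes with the action of `X` up to the anomaly
`-λ X'' f`. Since `X ↦ X'` and `X ↦ X''` are cocycles with values in densities of weights `0` and
`1`, multiplication by them gives cocycles, and the five maps are `X' f`, `(X' f)'`, `X'' f`,
`(X'' f)' + X'' f'` and `(X'' f')'`. Composing a cocycle with the derivative gives a cocycle as soon
as the anomalies are symmetric in `X` and `Y`: they vanish on weight `0`, and for `X''` they involve
`X` and `Y` only through the product `X'' Y''`.
-/

noncomputable section

/-- Polynomials over ℝ, identified with polynomial vector fields / densities on the line. -/
abbrev P : Type := Polynomial ℝ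

/-- Derivative d/dx. -/
def D : P → P := fun f => Polynomial.derivative f

/-- Iterated derivative: `Dk k f = f^(k)`. -/
def Dk (k : ℕ) : P → P := D^[k]

/-- Lie bracket on Vect(1): [X,Y] = XY' - X'Y. -/
def br (X Y : P) : P := X * D Y - D X * Y

/-- Action of the vector field X on λ-densities: `L_X^λ f = X f' + λ X' f`. -/
def Lw (l : ℝ) (X f : P) : P := X * D f + Polynomial.C l * D X * f

/-- Action on operators from F_ν to F_μ: `L_X^{ν,μ}(A) = L_X^μ ∘ A - A ∘ L_X^ν`. -/
def LD (nu mu : ℝ) (X : P) (A : P → P) (f : P) : P := Lw mu X (A f) - A (Lw nu X f)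

/-- 1-cocycle condition with values in D_{ν,μ}. -/
def IsCocycle1 (nu mu : ℝ) (c : P → P → P) : Prop :=
  ∀ X Y f, c (br X Y) f = LD nu mu X (c Y) f - LD nu mu Y (c X) f

/-- 2-cocycle condition with values in D_{ν,μ}. -/
def IsCocycle2 (nu mu : ℝ) (o : P → P → P → P) : Prop :=
  ∀ X Y Z f,
    LD nu mu X (o Y Z) f - LD nu mu Y (o X Z) f + LD nu mu Z (o X Y) f
      - o (br X Y) Z f + o (br X Z) Y f - o (br Y Z) X f = 0

/-- Cup product of 1-cochains: `[[C₁,C₂]](X,Y) = C₁(X)∘C₂(Y) - C₁(Y)∘C₂(X)`. -/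
def cup (c₁ c₂ : P → P → P) (X Y f : P) : P := c₁ X (c₂ Y f) - c₁ Y (c₂ X f)

/-- Coboundary of a 1-cochain b with values in D_{ν,μ}. -/
def cob (nu mu : ℝ) (b : P → P → P) (X Y f : P) : P :=
  LD nu mu X (b Y) f - LD nu mu Y (b X) f - b (br X Y) f

open Polynomial (C)

lemma D_add (f g : P) : D (f + g) = D f + D g :=
  Polynomial.derivative_add

lemma D_sub (f g : P) : D (f - g) = D f - D g :=
  Polynomial.derivative_sub

lemma D_mul (f g : P) : D (f * g) = D f * g + f * D g :=
  Polynomial.derivative_mul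

lemma D_C (k : ℝ) : D (C k) = 0 :=
  Polynomial.derivative_C

lemma Dk_two (f : P) : Dk 2 f = D (D f) :=
  rfl

lemma Dk_three (f : P) : Dk 3 f = D (Dk 2 f) :=
  rfl

lemma Lw_add (l : ℝ) (X f g : P) : Lw l X (f + g) = Lw l X f + Lw l X g := by
  simp only [Lw, D_add]
  ring

lemma Lw_mul (l α : ℝ) (X a f : P) :
    Lw (l + α) X (a * f) = Lw α X a * f + a * Lw l X f := by
  simp only [Lw, D_mul, Polynomial.C_add]
  ring

lemma Lw_D (l : ℝ) (X f : P) :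
    Lw (l + 1) X (D f) = D (Lw l X f) - C l * (Dk 2 X * f) := by
  simp only [Lw, Dk_two, D_add, D_mul, D_C, Polynomial.C_add, Polynomial.C_1]
  ring

/-- A 1-cocycle on Vect(1) with values in the densities of weight `α`. These are the coefficients
of the cocycles with values in operators of order zero. -/
def IsDensityCocycle (α : ℝ) (c : P → P) : Prop :=
  ∀ X Y, c (br X Y) = Lw α X (c Y) - Lw α Y (c X)

lemma isDensityCocycle_D : IsDensityCocycle 0 D := by
  intro X Y
  simp only [br, Lw, D_sub, D_mul, Polynomial.C_0]
  ring

lemma isDensityCocycle_Dk_two : IsDensityCocycle 1 (Dk 2) := by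
  intro X Y
  have D_Lw_zero (X f : P) : D (Lw 0 X f) = Lw 1 X (D f) := by
    simpa using (Lw_D 0 X f).symm
  simp only [Dk_two, isDensityCocycle_D X Y, D_sub, D_Lw_zero]

lemma IsDensityCocycle.isCocycle1_mul {α : ℝ} {c : P → P} (hc : IsDensityCocycle α c) (l : ℝ) :
    IsCocycle1 l (l + α) (fun X f => c X * f) := by
  intro X Y f
  simp only [LD, hc X Y, Lw_mul]
  ring

namespace IsCocycle1

variable {ν μ : ℝ} {c c' : P → P → P}

lemma add (hc : IsCocycle1 ν μ c) (hc' : IsCocycle1 ν μ c') :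
    IsCocycle1 ν μ (fun X f => c X f + c' X f) := by
  intro X Y f
  simp only [hc X Y f, hc' X Y f, LD, Lw_add]
  ring

lemma D_comp (hc : IsCocycle1 ν μ c)
    (hsymm : ∀ X Y f, C μ * (Dk 2 X * c Y f) = C μ * (Dk 2 Y * c X f)) :
    IsCocycle1 ν (μ + 1) (fun X f => D (c X f)) := by
  intro X Y f
  simp only [hc X Y f, LD, D_sub, Lw_D, hsymm X Y f]
  ring

lemma comp_D (hc : IsCocycle1 (ν + 1) μ c) (hadd : ∀ X f g, c X (f + g) = c X f + c X g)
    (hsymm : ∀ X Y f, c Y (C ν * (Dk 2 X * f)) = c X (C ν * (Dk 2 Y * f))) :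
    IsCocycle1 ν μ (fun X f => c X (D f)) := by
  intro X Y f
  have D_Lw (X : P) : D (Lw ν X f) = Lw (ν + 1) X (D f) + C ν * (Dk 2 X * f) := by
    rw [Lw_D, sub_add_cancel]
  simp only [hc X Y (D f), LD, D_Lw, hadd, hsymm X Y f]
  ring

end IsCocycle1

lemma isCocycle1_Dk_two_mul (l : ℝ) : IsCocycle1 l (l + 1) (fun X f => Dk 2 X * f) :=
  isDensityCocycle_Dk_two.isCocycle1_mul l

lemma isCocycle1_Dk_two_mul_D (l : ℝ) : IsCocycle1 l (l + 1 + 1) (fun X f => Dk 2 X * D f) :=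
  (isCocycle1_Dk_two_mul (l + 1)).comp_D (fun _ _ _ => mul_add _ _ _) (fun _ _ _ => by ring)

lemma isCocycle1_D_mul : IsCocycle1 0 1 (fun X f => D (D X * f)) := by
  have h := (isDensityCocycle_D.isCocycle1_mul 0).D_comp (by simp)
  simpa only [add_zero, zero_add] using h

lemma isCocycle1_D_Dk_two_mul (l : ℝ) : IsCocycle1 l (l + 1 + 1) (fun X f => D (Dk 2 X * f)) :=
  (isCocycle1_Dk_two_mul l).D_comp (fun _ _ _ => by ring)

lemma isCocycle1_D_Dk_two_mul_D (l : ℝ) :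
    IsCocycle1 l (l + 1 + 1 + 1) (fun X f => D (Dk 2 X * D f)) :=
  (isCocycle1_Dk_two_mul_D l).D_comp (fun _ _ _ => by ring)

/-- the maps `C_{λ,λ}`, `C_{λ,λ+2}`, `C_{λ,λ+3}`, `C_{0,1}` and `C̃_{0,1}`
are 1-cocycles on Vect(1). -/
theorem one_cocycles_low_order (l : ℝ) :
    IsCocycle1 l l (fun X f => D X * f) ∧
    IsCocycle1 l (l + 2) (fun X f => Dk 3 X * f + 2 * Dk 2 X * D f) ∧
    IsCocycle1 l (l + 3) (fun X f => Dk 3 X * D f + Dk 2 X * Dk 2 f) ∧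
    IsCocycle1 0 1 (fun X f => Dk 2 X * f) ∧
    IsCocycle1 0 1 (fun X f => D (D X * f)) := by
  refine ⟨?_, ?_, ?_, ?_, isCocycle1_D_mul⟩
  · simpa only [add_zero] using isDensityCocycle_D.isCocycle1_mul l
  · convert (isCocycle1_D_Dk_two_mul l).add (isCocycle1_Dk_two_mul_D l) using 1
    · ring
    · funext X f
      rw [D_mul, ← Dk_three]
      ring
  · convert isCocycle1_D_Dk_two_mul_D l using 1
    · ring
    · funext X f
      rw [D_mul, ← Dk_three, ← Dk_two f]
  · simpa only [zero_add] using isCocycle1_Dk_two_mul 0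
end
end

section
/- For every λ ∈ ℝ, the map C_{λ,λ+4}(X)(f) = −λX^(5)f + X^(4)f′ − 6X‴f″ − 4X″f‴ is a 1-cocycle on Vect(1) with values in D_{λ,λ+4}, i.e. C_{λ,λ+4}([X,Y]) = L_X^{λ,λ+4}(C_{λ,λ+4}(Y)) − L_Y^{λ,λ+4}(C_{λ,λ+4}(X)) for all X,Y ∈ ℝ[x]. -/
noncomputable section

/-!
Write `W i j = X⁽ⁱ⁾ Y⁽ʲ⁾ - X⁽ʲ⁾ Y⁽ⁱ⁾`. By the Leibniz rule, the coboundary of each elementary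
cochain `X ↦ X⁽ᵐ⁾ dⁿ` with `2 ≤ m` and `m + n = 5` is a combination of only `W 2 4 f` and
`W 2 3 f'`: all terms with an undifferentiated or once differentiated vector field cancel, and
`W i i = 0`. Hence `a X⁽⁵⁾ f + b X⁽⁴⁾ f' + c X⁽³⁾ f'' + e X'' f⁽³⁾` is a cocycle as soon as
`5 a + λ b = λ e` and `2 b + (1 + 2 λ) c = (1 + 3 λ) e`, and `(a, b, c, e) = (-λ, 1, -6, -4)`
solves these equations.
-/

section Derivation

open Finset Function

variable {R A : Type*} [CommRing R] [CommRing A] [Algebra R A] (d : Derivation R A A)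

/-- The Lie bracket of the vector fields `X • d` and `Y • d`, as an element of `A`. -/
def fieldBracket (X Y : A) : A := X * d Y - d X * Y

/-- The Lie derivative of densities of weight `w` along the vector field `X • d`. -/
def densityLie (w : R) (X f : A) : A := X * d f + algebraMap R A w * d X * f

/-- The Lie algebra coboundary of a 1-cochain `c` with values in the operators from densities of
weight `ν` to densities of weight `μ`. Linearity of `c` is not built in. -/
def densityCoboundary (ν μ : R) (c : A → A → A) (X Y f : A) : A :=
  (densityLie d μ X (c Y f) - c Y (densityLie d ν X f)) -
    (densityLie d μ Y (c X f) - c X (densityLie d ν Y f)) - c (fieldBracket d X Y) f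

/-- The elementary 1-cochain `X ↦ X⁽ᵐ⁾ dⁿ`. -/
def jetCochain (m n : ℕ) (X f : A) : A := d^[m] X * d^[n] f

/-- The skew-symmetric pairing `X⁽ⁱ⁾ Y⁽ʲ⁾ - X⁽ʲ⁾ Y⁽ⁱ⁾`, in terms of which coboundaries of
`jetCochain`s are expanded. -/
def jetWedge (i j : ℕ) (X Y : A) : A := d^[i] X * d^[j] Y - d^[j] X * d^[i] Y

theorem iterate_derivation_mul (n : ℕ) (a b : A) :
    d^[n] (a * b) = ∑ ij ∈ antidiagonal n, (n.choose ij.1 : A) * (d^[ij.1] a * d^[ij.2] b) := by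
  induction n with
  | zero => simp
  | succ n ih =>
    rw [sum_antidiagonal_choose_succ_mul (fun i j => d^[i] a * d^[j] b), iterate_succ_apply', ih,
      map_sum, ← sum_add_distrib]
    refine sum_congr rfl fun ⟨i, j⟩ hij => ?_
    rw [n.choose_symm_of_eq_add (mem_antidiagonal.1 hij).symm]
    simp only [Derivation.leibniz, Derivation.map_natCast, smul_eq_mul, iterate_succ_apply']
    ring

theorem iterate_derivation_algebraMap_mul (n : ℕ) (r : R) (a : A) :
    d^[n] (algebraMap R A r * a) = algebraMap R A r * d^[n] a := by
  induction n with
  | zero => rfl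
  | succ n ih => simp [iterate_succ_apply', ih]

theorem iterate_fieldBracket (m : ℕ) (X Y : A) :
    d^[m] (fieldBracket d X Y) =
      ∑ ij ∈ antidiagonal m, (m.choose ij.1 : A) * jetWedge d ij.1 (ij.2 + 1) X Y := by
  rw [fieldBracket, mul_comm (d X), iterate_map_sub, iterate_derivation_mul,
    iterate_derivation_mul, ← sum_sub_distrib]
  refine sum_congr rfl fun ij _ => ?_
  simp only [jetWedge, iterate_succ_apply]
  ring

theorem iterate_fieldBracket_add_two (p : ℕ) (X Y : A) :
    d^[p + 2] (fieldBracket d X Y) =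
      jetWedge d 0 (p + 3) X Y + (p + 1) * jetWedge d 1 (p + 2) X Y +
        ∑ k ∈ range p, ((p + 2).choose (k + 2) : A) * jetWedge d (k + 2) (p - k + 1) X Y := by
  rw [iterate_fieldBracket, Nat.sum_antidiagonal_succ, Nat.sum_antidiagonal_succ,
    Nat.sum_antidiagonal_eq_sum_range_succ_mk, sum_range_succ]
  have hskew : jetWedge d (p + 2) 1 X Y = -jetWedge d 1 (p + 2) X Y := by
    simp only [jetWedge]
    ring
  simp only [Nat.choose_zero_right, Nat.cast_one, one_mul, zero_add, Nat.choose_one_right,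
    Nat.cast_add, Nat.cast_ofNat, Nat.choose_self, tsub_self, hskew]
  ring

theorem iterate_densityLie (n : ℕ) (w : R) (X f : A) :
    d^[n] (densityLie d w X f) = X * d^[n + 1] f +
      ∑ ij ∈ antidiagonal n, (n.choose (ij.1 + 1) + algebraMap R A w * n.choose ij.1) *
        (d^[ij.1 + 1] X * d^[ij.2] f) := by
  have transport : d^[n] (X * d f) = X * d^[n + 1] f +
      ∑ ij ∈ antidiagonal n, (n.choose (ij.1 + 1) : A) * (d^[ij.1 + 1] X * d^[ij.2] f) := by
    -- Peel off either end of the sum over `i + j = n + 1`, whose last term has coefficient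
    -- `n.choose (n + 1) = 0`.
    let term (ij : ℕ × ℕ) : A := n.choose ij.1 * (d^[ij.1] X * d^[ij.2] f)
    calc d^[n] (X * d f)
      _ = ∑ ij ∈ antidiagonal n, term (ij.1, ij.2 + 1) := iterate_derivation_mul d n X (d f)
      _ = ∑ ij ∈ antidiagonal (n + 1), term ij := by
        simp [Nat.sum_antidiagonal_succ', term]
      _ = _ := by simp [Nat.sum_antidiagonal_succ, term]
  rw [densityLie, iterate_map_add, transport, mul_assoc, iterate_derivation_algebraMap_mul,
    iterate_derivation_mul, mul_sum, add_assoc, ← sum_add_distrib]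
  simp only [iterate_succ_apply]
  congr 1
  refine sum_congr rfl fun ij _ => ?_
  ring

theorem iterate_densityLie_eq_sum_range (n : ℕ) (w : R) (X f : A) :
    d^[n] (densityLie d w X f) = X * d^[n + 1] f + (n + algebraMap R A w) * (d X * d^[n] f) +
      ∑ k ∈ range n, (n.choose (k + 2) + algebraMap R A w * n.choose (k + 1)) *
        (d^[k + 2] X * d^[n - (k + 1)] f) := by
  rw [iterate_densityLie, Nat.sum_antidiagonal_eq_sum_range_succ_mk, sum_range_succ']
  simp only [zero_add, Nat.choose_one_right, Nat.choose_zero_right, Nat.cast_one, mul_one,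
    iterate_one, tsub_zero]
  ring

theorem densityCoboundary_jetCochain (p n : ℕ) {w μ : R} (hμ : μ = w + p + n + 1) (X Y f : A) :
    densityCoboundary d w μ (jetCochain d (p + 2) n) X Y f =
      ∑ k ∈ range n, (n.choose (k + 2) + algebraMap R A w * n.choose (k + 1)) *
          (jetWedge d (p + 2) (k + 2) X Y * d^[n - (k + 1)] f) -
        (∑ k ∈ range p, ((p + 2).choose (k + 2) : A) * jetWedge d (k + 2) (p - k + 1) X Y) *
          d^[n] f := by
  have sum_wedge : ∑ k ∈ range n, (n.choose (k + 2) + algebraMap R A w * n.choose (k + 1)) *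
          (jetWedge d (p + 2) (k + 2) X Y * d^[n - (k + 1)] f) =
      d^[p + 2] X * ∑ k ∈ range n, (n.choose (k + 2) + algebraMap R A w * n.choose (k + 1)) *
          (d^[k + 2] Y * d^[n - (k + 1)] f) -
        d^[p + 2] Y * ∑ k ∈ range n, (n.choose (k + 2) + algebraMap R A w * n.choose (k + 1)) *
          (d^[k + 2] X * d^[n - (k + 1)] f) := by
    rw [mul_sum, mul_sum, ← sum_sub_distrib]
    refine sum_congr rfl fun k _ => ?_
    simp only [jetWedge]
    ring
  subst hμ
  simp only [densityCoboundary, jetCochain, iterate_fieldBracket_add_two,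
    iterate_densityLie_eq_sum_range, sum_wedge]
  simp only [densityLie, jetWedge, Derivation.leibniz, smul_eq_mul, map_add, map_natCast,
    map_one, Nat.succ_eq_add_one, ← iterate_succ_apply', iterate_zero_apply, iterate_one]
  ring

theorem densityCoboundary_add (ν μ : R) (c₁ c₂ : A → A → A) :
    densityCoboundary d ν μ (c₁ + c₂) =
      densityCoboundary d ν μ c₁ + densityCoboundary d ν μ c₂ := by
  ext X Y f
  simp only [densityCoboundary, densityLie, Pi.add_apply, map_add]
  ring

theorem densityCoboundary_smul (ν μ r : R) (c : A → A → A) :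
    densityCoboundary d ν μ (r • c) = r • densityCoboundary d ν μ c := by
  ext X Y f
  simp only [densityCoboundary, densityLie, Pi.smul_apply, Derivation.map_smul]
  simp only [Algebra.smul_def]
  ring

theorem densityCoboundary_jetCochain_five_zero (w : R) (X Y f : A) :
    densityCoboundary d w (w + 4) (jetCochain d 5 0) X Y f = -5 * (jetWedge d 2 4 X Y * f) := by
  rw [densityCoboundary_jetCochain d 3 0 (by push_cast; ring)]
  simp only [sum_range_succ, sum_range_zero, Nat.choose, Nat.reduceAdd, Nat.reduceSub, jetWedge,
    iterate_zero_apply]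
  push_cast
  ring

theorem densityCoboundary_jetCochain_four_one (w : R) (X Y f : A) :
    densityCoboundary d w (w + 4) (jetCochain d 4 1) X Y f =
      -2 * (jetWedge d 2 3 X Y * d f) - algebraMap R A w * (jetWedge d 2 4 X Y * f) := by
  rw [densityCoboundary_jetCochain d 2 1 (by push_cast; ring)]
  simp only [sum_range_succ, sum_range_zero, Nat.choose, Nat.reduceAdd, Nat.reduceSub, jetWedge,
    iterate_zero_apply, iterate_one]
  push_cast
  ring

theorem densityCoboundary_jetCochain_three_two (w : R) (X Y f : A) :
    densityCoboundary d w (w + 4) (jetCochain d 3 2) X Y f =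
      -(1 + 2 * algebraMap R A w) * (jetWedge d 2 3 X Y * d f) := by
  rw [densityCoboundary_jetCochain d 1 2 (by push_cast; ring)]
  simp only [sum_range_succ, sum_range_zero, Nat.choose, Nat.reduceAdd, Nat.reduceSub, jetWedge,
    iterate_zero_apply, iterate_one]
  push_cast
  ring

theorem densityCoboundary_jetCochain_two_three (w : R) (X Y f : A) :
    densityCoboundary d w (w + 4) (jetCochain d 2 3) X Y f =
      (1 + 3 * algebraMap R A w) * (jetWedge d 2 3 X Y * d f) +
        algebraMap R A w * (jetWedge d 2 4 X Y * f) := by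
  rw [densityCoboundary_jetCochain d 0 3 (by push_cast; ring)]
  simp only [sum_range_succ, sum_range_zero, Nat.choose, Nat.reduceAdd, Nat.reduceSub, jetWedge,
    iterate_zero_apply, iterate_one]
  push_cast
  ring

theorem one_cocycle_order_four_general (l : R) :
    densityCoboundary d l (l + 4)
      (fun X f => -(algebraMap R A l) * d^[5] X * f + d^[4] X * d f
        - 6 * d^[3] X * d^[2] f - 4 * d^[2] X * d^[3] f) = 0 := by
  have hcochain : (fun X f => -(algebraMap R A l) * d^[5] X * f + d^[4] X * d f
        - 6 * d^[3] X * d^[2] f - 4 * d^[2] X * d^[3] f) =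
      -l • jetCochain d 5 0 + jetCochain d 4 1 + (-6 : R) • jetCochain d 3 2 +
        (-4 : R) • jetCochain d 2 3 := by
    ext X f
    simp only [jetCochain, Pi.add_apply, Pi.smul_apply, iterate_zero_apply, iterate_one]
    simp only [Algebra.smul_def, map_neg, map_ofNat]
    ring
  ext X Y f
  simp only [hcochain, densityCoboundary_add, densityCoboundary_smul, Pi.add_apply, Pi.smul_apply,
    densityCoboundary_jetCochain_five_zero, densityCoboundary_jetCochain_four_one,
    densityCoboundary_jetCochain_three_two, densityCoboundary_jetCochain_two_three, Pi.zero_apply]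
  simp only [Algebra.smul_def, map_neg, map_ofNat]
  ring

end Derivation

theorem isCocycle1_iff_densityCoboundary_eq_zero (ν μ : ℝ) (c : P → P → P) :
    IsCocycle1 ν μ c ↔ densityCoboundary Polynomial.derivative' ν μ c = 0 := by
  have coboundary_eq : densityCoboundary Polynomial.derivative' ν μ c = cob ν μ c := rfl
  simp only [coboundary_eq, IsCocycle1, funext_iff, cob, Pi.zero_apply, sub_eq_zero, eq_comm]

/-- `C_{λ,λ+4}` is a 1-cocycle on Vect(1) with values in D_{λ,λ+4}. -/
theorem one_cocycle_order_four (l : ℝ) :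
    IsCocycle1 l (l + 4)
      (fun X f => -(Polynomial.C l) * Dk 5 X * f + Dk 4 X * D f
        - 6 * Dk 3 X * Dk 2 f - 4 * Dk 2 X * Dk 3 f) :=
  (isCocycle1_iff_densityCoboundary_eq_zero _ _ _).2
    (one_cocycle_order_four_general Polynomial.derivative' l)
end
end

section
/- (Zeroth-order term of coboundaries in D_{0,5}.) Let α₀,…,α₆ ∈ ℝ and let b be the 1-cochain with values in D_{0,5} defined by b(X)(f) = Σ_{j=0}^{6} α_j X^(6−j) f^(j). Then for all X, Y ∈ ℝ[x], the zeroth-order part of ∂b(X,Y) (its coefficient of f, i.e. the terms of ∂b(X,Y)(f) involving f undifferentiated) equals −α₀(9X″Y^(5) + 5X‴Y^(4) − 9X^(5)Y″ − 5X^(4)Y‴)·f. -/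
noncomputable section

/-!
The constant function `1` is `Vect(1)`-invariant in `F_0`, so evaluation at `1` commutes with the
action on operators and sends `∂b` to the coboundary of the `F_μ`-valued cochain
`X ↦ b(X)(1) = α₀ X^(n)`. Hence the zeroth-order term of `∂b(X, Y)` is `α₀` times the failure of
`d^n/dx^n : Vect(1) → F_μ` to be a 1-cocycle. The bracket `[X, Y]` is the Wronskian of `X` and
`Y`, and by Leibniz's rule the terms of its `n`-th derivative containing an undifferentiated `X`
or `Y` are matched by those of the Lie derivatives. For `μ = n - 1`, in particular for
`n = 6` and `μ = 5`, the terms in `X' Y^(n)` and `X^(n) Y'` cancel as well.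
-/

open Finset Polynomial

theorem iterate_derivative_wronskian {R : Type*} [CommRing R] (n : ℕ) (p q : R[X]) :
    derivative^[n] (wronskian p q) =
      p * derivative^[n + 1] q - derivative^[n + 1] p * q +
        ∑ k ∈ range n, ((n.choose k : R[X]) - n.choose (k + 1)) *
          (derivative^[n - k] p * derivative^[k + 1] q) := by
  have leibniz_left : derivative^[n] (p * derivative q) = p * derivative^[n + 1] q +
      ∑ k ∈ range n, (n.choose k : R[X]) * (derivative^[n - k] p * derivative^[k + 1] q) := by
    rw [iterate_derivative_mul, sum_range_succ, add_comm]
    simp [nsmul_eq_mul]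
  have leibniz_right : derivative^[n] (derivative p * q) = derivative^[n + 1] p * q +
      ∑ k ∈ range n, (n.choose (k + 1) : R[X]) *
        (derivative^[n - k] p * derivative^[k + 1] q) := by
    rw [iterate_derivative_mul, sum_range_succ', add_comm]
    congr 1
    · simp
    · refine sum_congr rfl fun k hk => ?_
      have order_eq : n - (k + 1) + 1 = n - k := by have := mem_range.mp hk; lia
      rw [nsmul_eq_mul, ← Function.iterate_succ_apply derivative, Nat.succ_eq_add_one, order_eq]
  simp only [wronskian, iterate_derivative_sub, leibniz_left, leibniz_right, sub_mul,
    sum_sub_distrib]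
  ring

theorem Dk_eq_iterate_derivative (k : ℕ) (f : P) : Dk k f = derivative^[k] f := rfl

theorem Dk_succ (k : ℕ) (f : P) : Dk (k + 1) f = D (Dk k f) :=
  Function.iterate_succ_apply' D k f

theorem Dk_br (n : ℕ) (X Y : P) :
    Dk n (br X Y) = X * Dk (n + 1) Y - Dk (n + 1) X * Y +
      ∑ k ∈ range n, ((n.choose k : P) - n.choose (k + 1)) * (Dk (n - k) X * Dk (k + 1) Y) :=
  iterate_derivative_wronskian n X Y

theorem Lw_C_mul (l r : ℝ) (X f : P) : Lw l X (C r * f) = C r * Lw l X f := by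
  simp only [Lw, D, derivative_C_mul]
  ring

theorem Lw_zero_one (X : P) : Lw 0 X 1 = 0 := by
  simp [Lw, D]

theorem cob_apply_of_Lw_eq_zero {nu mu : ℝ} {b : P → P → P} {X Y f : P}
    (hX : Lw nu X f = 0) (hY : Lw nu Y f = 0) (hbX : b X 0 = 0) (hbY : b Y 0 = 0) :
    cob nu mu b X Y f = Lw mu X (b Y f) - Lw mu Y (b X f) - b (br X Y) f := by
  simp only [cob, LD, hX, hY, hbX, hbY, sub_zero]

/-- The homogeneous differential 1-cochain `X ↦ (f ↦ ∑ⱼ αⱼ X^(n-j) f^(j))` of order `n`, with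
coefficients `αⱼ = a j`. -/
def homogeneousCochain {n : ℕ} (a : Fin (n + 1) → ℝ) (X f : P) : P :=
  ∑ j : Fin (n + 1), C (a j) * Dk (n - (j : ℕ)) X * Dk (j : ℕ) f

section HomogeneousCochain

variable {n : ℕ} (a : Fin (n + 1) → ℝ)

theorem homogeneousCochain_apply_zero (X : P) : homogeneousCochain a X 0 = 0 := by
  simp [homogeneousCochain, Dk_eq_iterate_derivative]

theorem homogeneousCochain_apply_one (X : P) :
    homogeneousCochain a X 1 = C (a 0) * Dk n X := by
  rw [homogeneousCochain, Fin.sum_univ_succ, sum_eq_zero, add_zero]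
  · simp [Dk_eq_iterate_derivative]
  · intro j _
    rw [Dk_eq_iterate_derivative j.succ, iterate_derivative_one j.succ_pos, mul_zero]

theorem cob_homogeneousCochain_apply_one (mu : ℝ) (X Y : P) :
    cob 0 mu (homogeneousCochain a) X Y 1 =
      C (a 0) * (Lw mu X (Dk n Y) - Lw mu Y (Dk n X) - Dk n (br X Y)) := by
  rw [cob_apply_of_Lw_eq_zero (Lw_zero_one X) (Lw_zero_one Y)
    (homogeneousCochain_apply_zero a X) (homogeneousCochain_apply_zero a Y)]
  simp only [homogeneousCochain_apply_one, Lw_C_mul, mul_sub]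

theorem coboundary_zeroth_order_term_general (mu : ℝ) (X Y : P) :
    cob 0 mu (homogeneousCochain a) X Y 1 =
      C (a 0) * (C mu * (Dk 1 X * Dk n Y - Dk n X * Dk 1 Y) -
        ∑ k ∈ range n, ((n.choose k : P) - n.choose (k + 1)) *
          (Dk (n - k) X * Dk (k + 1) Y)) := by
  have Dk_one (Z : P) : Dk 1 Z = D Z := rfl
  rw [cob_homogeneousCochain_apply_one, Dk_br]
  simp only [Lw, Dk_succ n, Dk_one]
  ring

end HomogeneousCochain

/-- the zeroth-order term (coefficient of `f`, obtained by evaluating the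
operator at the constant polynomial 1) of a coboundary in `D_{0,5}`. -/
theorem coboundary_zeroth_order_term (a : Fin 7 → ℝ) :
    ∀ X Y : P,
      cob 0 5
        (fun X f => ∑ j : Fin 7,
          Polynomial.C (a j) * Dk (6 - (j : ℕ)) X * Dk (j : ℕ) f) X Y 1
      = Polynomial.C (-(a 0)) *
          (9 * Dk 2 X * Dk 5 Y + 5 * Dk 3 X * Dk 4 Y
            - 9 * Dk 5 X * Dk 2 Y - 5 * Dk 4 X * Dk 3 Y) := by
  intro X Y
  refine (coboundary_zeroth_order_term_general a 5 X Y).trans ?_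
  have C_five : (C 5 : P) = 5 := map_ofNat C 5
  simp only [sum_range_succ, sum_range_zero, Nat.choose, Nat.reduceAdd, Nat.reduceSub,
    C_five, C_neg]
  push_cast
  ring
end
end

section
/- Define Ω̃_{0,5}(X,Y)(f) = 2X^(5)Y′f′ + 5X′Y^(4)f″ + 10X‴Y′f‴ + 5X″Y′f^(4) − (the same expression with X and Y exchanged). Then Ω̃_{0,5} = −[[C_{5,5}, C_{0,5}]] (with C_{5,5}(X)(f) = X′f valued in D_{5,5} and C_{0,5}(X)(f) = 2X^(5)f′ − 5X^(4)f″ + 10X‴f‴ + 5X″f^(4) valued in D_{0,5}), and Ω̃_{0,5} is a 2-cocycle on Vect(1) with values in D_{0,5}. -/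
/-!
The Lie derivative of operators satisfies the Leibniz rule `L_X(A ∘ B) = L_X(A) ∘ B + A ∘ L_X(B)`,
so the cup product of two 1-cocycles is a 2-cocycle. Here the factors are the divergence cocycle
`X ↦ X'`, valued in `D_{λ,λ}` for every weight `λ`, and `C_{0,5}`. The cocycle condition for
`C_{0,5}` reduces to a single expansion of `∂ⁿ ∘ L_X^λ - L_X^{λ+n} ∘ ∂ⁿ`: at `λ = 0` it gives the
Lie derivatives of the operators `∂ⁿ`, and at `λ = -1` the derivatives of a bracket, because
`[X,Y] = L_X^{-1} Y`.
-/


noncomputable section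

/-- Half of the 2-cocycle `Ω̃_{0,5}`. -/
def term13 (X Y f : P) : P :=
  2 * Dk 5 X * D Y * D f + 5 * D X * Dk 4 Y * Dk 2 f
    + 10 * Dk 3 X * D Y * Dk 3 f + 5 * Dk 2 X * D Y * Dk 4 f

theorem Lw_sub (l : ℝ) (X f g : P) : Lw l X (f - g) = Lw l X f - Lw l X g := by
  simp only [Lw, D, Polynomial.derivative_sub]
  ring

theorem Lw_neg (l : ℝ) (X f : P) : Lw l X (-f) = -Lw l X f := by
  simp only [Lw, D, Polynomial.derivative_neg]
  ring

theorem Lw_add_mul (l m : ℝ) (X f g : P) : Lw (l + m) X (f * g) = Lw l X f * g + f * Lw m X g := by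
  simp only [Lw, D, Polynomial.derivative_mul, map_add]
  ring

theorem LD_sub (nu mu : ℝ) (X : P) (A B : P → P) (f : P) :
    LD nu mu X (A - B) f = LD nu mu X A f - LD nu mu X B f := by
  simp only [LD, Pi.sub_apply, Lw_sub]
  abel

theorem LD_neg (nu mu : ℝ) (X : P) (A : P → P) (f : P) :
    LD nu mu X (-A) f = -LD nu mu X A f := by
  simp only [LD, Pi.neg_apply, Lw_neg]
  abel

theorem LD_comp (lam mu nu : ℝ) (X : P) {A : P → P} (hA : ∀ f g, A (f - g) = A f - A g)
    (B : P → P) (f : P) :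
    LD lam nu X (A ∘ B) f = LD mu nu X A (B f) + A (LD lam mu X B f) := by
  simp only [LD, Function.comp_apply, hA]
  abel

theorem cup_eq_comp_sub_comp (c₁ c₂ : P → P → P) (X Y : P) :
    cup c₁ c₂ X Y = c₁ X ∘ c₂ Y - c₁ Y ∘ c₂ X :=
  rfl

theorem IsCocycle2.neg {nu mu : ℝ} {o : P → P → P → P} (ho : IsCocycle2 nu mu o) :
    IsCocycle2 nu mu (-o) := by
  intro X Y Z f
  simp only [Pi.neg_apply, LD_neg]
  linear_combination -ho X Y Z f

theorem IsCocycle1.isCocycle2_cup {lam mu nu : ℝ} {c₁ c₂ : P → P → P} (h₁ : IsCocycle1 mu nu c₁)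
    (hc₁ : ∀ X f g, c₁ X (f - g) = c₁ X f - c₁ X g) (h₂ : IsCocycle1 lam mu c₂) :
    IsCocycle2 lam nu (cup c₁ c₂) := by
  intro X Y Z f
  have leibniz (U V W : P) : LD lam nu U (cup c₁ c₂ V W) f =
      LD mu nu U (c₁ V) (c₂ W f) + c₁ V (LD lam mu U (c₂ W) f) -
        (LD mu nu U (c₁ W) (c₂ V f) + c₁ W (LD lam mu U (c₂ V) f)) := by
    rw [cup_eq_comp_sub_comp, LD_sub, LD_comp lam mu nu U (hc₁ V), LD_comp lam mu nu U (hc₁ W)]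
  have bracket (U V W : P) : cup c₁ c₂ (br U V) W f =
      LD mu nu U (c₁ V) (c₂ W f) - LD mu nu V (c₁ U) (c₂ W f) -
        (c₁ W (LD lam mu U (c₂ V) f) - c₁ W (LD lam mu V (c₂ U) f)) := by
    rw [cup, h₁, h₂, hc₁]
  rw [leibniz, leibniz, leibniz, bracket, bracket, bracket]
  abel

/-- The divergence cochain `X ↦ X'`, acting on densities by multiplication; on `F_5` it is the
`C_{5,5}` of the paper. -/
def divergence (X f : P) : P := D X * f

theorem D_br (X Y : P) : D (br X Y) = X * D (D Y) - D (D X) * Y := by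
  simp only [br, D, Polynomial.derivative_sub, Polynomial.derivative_mul]
  ring

theorem divergence_sub (X f g : P) : divergence X (f - g) = divergence X f - divergence X g :=
  mul_sub (D X) f g

theorem LD_divergence (l : ℝ) (X Y f : P) : LD l l X (divergence Y) f = X * D (D Y) * f := by
  simp only [LD, Lw, divergence, D, Polynomial.derivative_mul]
  ring

theorem isCocycle1_divergence (l : ℝ) : IsCocycle1 l l divergence := by
  intro X Y f
  rw [LD_divergence, LD_divergence, divergence, D_br]
  ring

theorem Dk_zero (f : P) : Dk 0 f = f :=
  rfl

theorem Dk_one (f : P) : Dk 1 f = D f :=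
  rfl

theorem Dk_add (n : ℕ) (f g : P) : Dk n (f + g) = Dk n f + Dk n g :=
  iterate_map_add Polynomial.derivative n f g

theorem Dk_C_mul (n : ℕ) (a : ℝ) (f : P) : Dk n (Polynomial.C a * f) = Polynomial.C a * Dk n f :=
  Polynomial.iterate_derivative_C_mul a f n

theorem Dk_D (n : ℕ) (f : P) : Dk n (D f) = Dk (n + 1) f :=
  (Function.iterate_succ_apply D n f).symm

theorem D_Dk (n : ℕ) (f : P) : D (Dk n f) = Dk (n + 1) f :=
  (Function.iterate_succ_apply' D n f).symm

theorem Dk_mul (n : ℕ) (f g : P) :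
    Dk n (f * g) = ∑ j ∈ Finset.range (n + 1), (n.choose j : P) * Dk j f * Dk (n - j) g := by
  have leibniz : Dk n (g * f) =
      ∑ j ∈ Finset.range n.succ, n.choose j • (Dk (n - j) g * Dk j f) :=
    Polynomial.iterate_derivative_mul g f
  rw [mul_comm, leibniz]
  refine Finset.sum_congr rfl fun j _ => ?_
  rw [nsmul_eq_mul]
  ring

theorem Dk_D_mul (n : ℕ) (X f : P) :
    Dk n (D X * f) = D X * Dk n f +
      ∑ j ∈ Finset.range n, (n.choose (j + 1) : P) * Dk (j + 2) X * Dk (n - (j + 1)) f := by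
  rw [Dk_mul, Finset.sum_range_succ', add_comm]
  simp only [Dk_D, Nat.choose_zero_right, Nat.cast_one, one_mul, Nat.sub_zero]
  rfl

theorem Dk_succ_mul (n : ℕ) (X f : P) :
    Dk (n + 1) (X * f) = X * Dk (n + 1) f + (n + 1) * D X * Dk n f +
      ∑ j ∈ Finset.range n,
        ((n + 1).choose (j + 2) : P) * Dk (j + 2) X * Dk (n - (j + 1)) f := by
  rw [Dk_mul, Finset.sum_range_succ', Finset.sum_range_succ']
  simp only [zero_add, Nat.choose_zero_right, Nat.choose_one_right, Nat.cast_one, one_mul,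
    Nat.cast_add, Nat.add_sub_add_right, Nat.sub_zero, Dk_zero, Dk_one, Nat.add_sub_cancel]
  ring

-- This form of `L_X` turns `∂ⁿ ∘ L_X` into the two Leibniz expansions `Dk_succ_mul` and `Dk_D_mul`.
theorem Lw_eq_D_mul_add (l : ℝ) (X f : P) :
    Lw l X f = D (X * f) + Polynomial.C (l - 1) * (D X * f) := by
  simp only [Lw, D, Polynomial.derivative_mul, map_sub, map_one]
  ring

theorem Dk_Lw (n : ℕ) (l : ℝ) (X f : P) :
    Dk n (Lw l X f) = Lw (l + n) X (Dk n f) + ∑ j ∈ Finset.range n,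
      Polynomial.C ((n + 1).choose (j + 2) + (l - 1) * n.choose (j + 1)) *
        Dk (j + 2) X * Dk (n - (j + 1)) f := by
  rw [Lw_eq_D_mul_add, Dk_add, Dk_C_mul, Dk_D, Dk_succ_mul, Dk_D_mul, Lw, D_Dk]
  simp only [add_mul, Finset.sum_add_distrib, mul_add, Finset.mul_sum, map_add, map_sub, map_mul,
    map_one, map_natCast, mul_assoc]
  ring

theorem br_eq_Lw (X Y : P) : br X Y = Lw (-1) X Y := by
  simp [br, Lw, sub_eq_add_neg]

theorem LD_mul_Dk (l mu : ℝ) (n : ℕ) (X g f : P) :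
    LD l mu X (fun f => g * Dk n f) f = Lw (mu - (l + n)) X g * Dk n f -
      g * ∑ j ∈ Finset.range n,
        Polynomial.C ((n + 1).choose (j + 2) + (l - 1) * n.choose (j + 1)) *
          Dk (j + 2) X * Dk (n - (j + 1)) f := by
  have leibniz := Lw_add_mul (mu - (l + n)) (l + n) X g (Dk n f)
  rw [sub_add_cancel] at leibniz
  rw [LD, leibniz, Dk_Lw]
  ring

/-- The cochain `C_{0,5}`, whose values are differential operators from `F_0` to `F_5`. -/
def cochain05 (X f : P) : P :=
  2 * Dk 5 X * D f - 5 * Dk 4 X * Dk 2 f + 10 * Dk 3 X * Dk 3 f + 5 * Dk 2 X * Dk 4 f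

theorem LD_cochain05 (X Y f : P) :
    LD 0 5 X (cochain05 Y) f =
      2 * Lw 4 X (Dk 5 Y) * D f -
      5 * (Lw 3 X (Dk 4 Y) * Dk 2 f - Dk 4 Y * (Dk 2 X * D f)) +
      10 * (Lw 2 X (Dk 3 Y) * Dk 3 f - Dk 3 Y * (3 * Dk 2 X * Dk 2 f + Dk 3 X * D f)) +
      5 * (Lw 1 X (Dk 2 Y) * Dk 4 f -
        Dk 2 Y * (6 * Dk 2 X * Dk 3 f + 4 * Dk 3 X * Dk 2 f + Dk 4 X * D f)) := by
  have by_order : LD 0 5 X (cochain05 Y) f =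
      2 * LD 0 5 X (fun f => Dk 5 Y * Dk 1 f) f - 5 * LD 0 5 X (fun f => Dk 4 Y * Dk 2 f) f +
        10 * LD 0 5 X (fun f => Dk 3 Y * Dk 3 f) f +
        5 * LD 0 5 X (fun f => Dk 2 Y * Dk 4 f) f := by
    simp only [LD, Lw, cochain05, Dk_one, D, Polynomial.derivative_add, Polynomial.derivative_sub,
      Polynomial.derivative_mul, Polynomial.derivative_ofNat]
    ring
  simp only [by_order, LD_mul_Dk, Finset.sum_range_succ, Finset.sum_range_zero]
  norm_num [Nat.choose, Dk_one, map_ofNat]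
  ring

theorem Dk_two_br (X Y : P) :
    Dk 2 (br X Y) = Lw 1 X (Dk 2 Y) - Dk 2 X * D Y - Dk 3 X * Y := by
  rw [br_eq_Lw, Dk_Lw]
  norm_num [Finset.sum_range_succ, Nat.choose, Dk_zero, Dk_one, map_ofNat]
  ring

theorem Dk_three_br (X Y : P) :
    Dk 3 (br X Y) = Lw 2 X (Dk 3 Y) - 2 * Dk 3 X * D Y - Dk 4 X * Y := by
  rw [br_eq_Lw, Dk_Lw]
  norm_num [Finset.sum_range_succ, Nat.choose, Dk_zero, Dk_one, map_ofNat]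
  ring

theorem Dk_four_br (X Y : P) :
    Dk 4 (br X Y) = Lw 3 X (Dk 4 Y) + 2 * Dk 2 X * Dk 3 Y - 2 * Dk 3 X * Dk 2 Y
      - 3 * Dk 4 X * D Y - Dk 5 X * Y := by
  rw [br_eq_Lw, Dk_Lw]
  norm_num [Finset.sum_range_succ, Nat.choose, Dk_zero, Dk_one, map_ofNat]
  ring

theorem Dk_five_br (X Y : P) :
    Dk 5 (br X Y) = Lw 4 X (Dk 5 Y) + 5 * Dk 2 X * Dk 4 Y - 5 * Dk 4 X * Dk 2 Y -
      4 * Dk 5 X * D Y - Dk 6 X * Y := by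
  rw [br_eq_Lw, Dk_Lw]
  norm_num [Finset.sum_range_succ, Nat.choose, Dk_zero, Dk_one, map_ofNat]
  ring

theorem isCocycle1_cochain05 : IsCocycle1 0 5 cochain05 := by
  intro X Y f
  rw [LD_cochain05, LD_cochain05, cochain05, Dk_two_br, Dk_three_br, Dk_four_br, Dk_five_br]
  simp only [Lw, D_Dk, map_ofNat, map_one]
  ring

/-- `Ω̃_{0,5} = -[[C_{5,5},C_{0,5}]]` is a 2-cocycle with values
in `D_{0,5}`. -/
theorem Om05tilde_two_cocycle :
    (∀ X Y f : P, term13 X Y f - term13 Y X f =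
      - cup (fun X f => D X * f)
          (fun X f => 2 * Dk 5 X * D f - 5 * Dk 4 X * Dk 2 f
            + 10 * Dk 3 X * Dk 3 f + 5 * Dk 2 X * Dk 4 f) X Y f) ∧
    IsCocycle2 0 5 (fun X Y f => term13 X Y f - term13 Y X f) := by
  have eq_neg_cup (X Y f : P) : term13 X Y f - term13 Y X f =
      -cup divergence cochain05 X Y f := by
    simp only [term13, cup, divergence, cochain05]
    ring
  refine ⟨eq_neg_cup, ?_⟩
  have eq_neg : (fun X Y f => term13 X Y f - term13 Y X f) = -cup divergence cochain05 :=
    funext₃ eq_neg_cup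
  rw [eq_neg]
  exact ((isCocycle1_divergence 5).isCocycle2_cup divergence_sub isCocycle1_cochain05).neg
end
end
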